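/- (Kummer's first quadratic identity) Let β₁, β₂ be real numbers with β₁ > 0 and β₂ > 0, and let Λ be a real number with 0 < Λ < 1. Then ₂F₁(β₁+β₂−1/2, β₂; β₁+1/2; ((1−Λ)/(1+Λ))²) = ((1+Λ)/2)^{2β₁+2β₂−1} · ₂F₁(β₁+β₂−1/2, β₁; 2β₁; 1−Λ²). -/

import Mathlib

/-- Pochhammer symbol `(x)_n` in `ℝ`. -/
noncomputable def rpoch (x : ℝ) (n : ℕ) : ℝ := (ascPochhammer ℝ n).eval x

/-- Gauss' hypergeometric series `₂F₁` (real). -/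
noncomputable def hyp2F1 (a b c z : ℝ) : ℝ :=
  ∑' n : ℕ, rpoch a n * rpoch b n / (rpoch c n * (n.factorial : ℝ)) * z ^ n

/-!
Both sides of the identity, as functions of `x = (1 - Λ) / (1 + Λ)`, solve one and the same Fuchsian
equation: the substitutions `z = x ^ 2` and `z = 4 * x / (1 + x) ^ 2` turn Gauss' equations into it,
the latter after multiplying the solution by `(1 + x) ^ (-2 * a)`. At its regular singular point `0`
the indicial exponents are `0` and `1 - 2 * b`; when `1 - 2 * b` is not a positive integer, an
analytic solution vanishing at `0` vanishes near `0`. Hence the two sides agree near `0`, and by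
analytic continuation on the whole interval on which both arguments stay in the unit disc.
-/

open Filter Topology FormalMultilinearSeries

section PowerSeries

variable {𝕜 : Type*} [NontriviallyNormedField 𝕜] {f : 𝕜 → 𝕜} {u : ℕ → 𝕜} {r : ENNReal} {z s : 𝕜}

theorem hasSum_mul_pow_of_hasFPowerSeriesOnBall_ofScalars
    (h : HasFPowerSeriesOnBall f (ofScalars 𝕜 u) 0 r) (hz : z ∈ Metric.eball 0 r) :
    HasSum (fun n => u n * z ^ n) (f z) := by
  simpa [ofScalars_apply_eq, mul_comm] using h.hasSum hz

theorem hasFPowerSeriesOnBall_deriv_ofScalars [CompleteSpace 𝕜]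
    (h : HasFPowerSeriesOnBall f (ofScalars 𝕜 u) 0 r) :
    HasFPowerSeriesOnBall (deriv f) (ofScalars 𝕜 fun n => (n + 1) * u (n + 1)) 0 r := by
  have hseries : (ContinuousLinearMap.apply 𝕜 𝕜 1).compFormalMultilinearSeries
      (ofScalars 𝕜 u).derivSeries = ofScalars 𝕜 fun n => (n + 1) * u (n + 1) := by
    refine FormalMultilinearSeries.ext fun n => ContinuousMultilinearMap.ext_ring ?_
    simp
  rw [← hseries]
  exact (ContinuousLinearMap.apply 𝕜 𝕜 1).comp_hasFPowerSeriesOnBall h.fderiv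

theorem hasSum_natCast_mul_pow_of_succ (h : HasSum (fun n : ℕ => (n + 1) * u (n + 1) * z ^ n) s) :
    HasSum (fun n : ℕ => n * u n * z ^ n) (z * s) := by
  rw [← hasSum_nat_add_iff' 1]
  simpa [pow_succ', mul_left_comm] using h.mul_left z

end PowerSeries

section Frobenius

variable {𝕜 : Type*} [NontriviallyNormedField 𝕜] {x₀ : 𝕜}

theorem eventually_sub_mul_deriv_eq {y E : 𝕜 → 𝕜} {k : ℕ}
    (hE : ∀ᶠ x in 𝓝 x₀, DifferentiableAt 𝕜 E x) (hy : ∀ᶠ x in 𝓝 x₀, y x = (x - x₀) ^ k * E x) :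
    ∀ᶠ x in 𝓝 x₀,
      (x - x₀) * deriv y x = (x - x₀) ^ k * (k * E x + (x - x₀) * deriv E x) := by
  filter_upwards [EventuallyEq.deriv hy, hE] with x hyx hEx
  have hpow : HasDerivAt (fun t => (t - x₀) ^ k) (k * (x - x₀) ^ (k - 1)) x := by
    simpa using ((hasDerivAt_id' x).sub_const x₀).fun_pow k
  rw [hyx, (hpow.fun_mul hEx.hasDerivAt).deriv]
  obtain _ | k := k
  · simp
  · rw [Nat.add_sub_cancel]
    ring

theorem sub_sq_mul_iteratedDeriv_two {y : 𝕜 → 𝕜} {x : 𝕜} (hy : DifferentiableAt 𝕜 (deriv y) x) :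
    (x - x₀) ^ 2 * iteratedDeriv 2 y x =
      (x - x₀) * deriv (fun t => (t - x₀) * deriv y t) x - (x - x₀) * deriv y x := by
  rw [(((hasDerivAt_id' x).sub_const x₀).fun_mul hy.hasDerivAt).deriv, iteratedDeriv_succ,
    iteratedDeriv_one]
  ring

variable [CompleteSpace 𝕜] {y p q r : 𝕜 → 𝕜}

theorem indicial_eq_zero_of_eventually_eq_sub_pow_mul {E : 𝕜 → 𝕜} {k : ℕ}
    (hE : AnalyticAt 𝕜 E x₀) (hE₀ : E x₀ ≠ 0) (hy : ∀ᶠ x in 𝓝 x₀, y x = (x - x₀) ^ k * E x)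
    (hp : ContinuousAt p x₀) (hq : ContinuousAt q x₀) (hr : ContinuousAt r x₀)
    (hode : ∀ᶠ x in 𝓝[≠] x₀, (x - x₀) ^ 2 * p x * iteratedDeriv 2 y x +
      (x - x₀) * q x * deriv y x + r x * y x = 0) :
    k * (k - 1) * p x₀ + k * q x₀ + r x₀ = 0 := by
  have hyan : AnalyticAt 𝕜 y x₀ := AnalyticAt.congr (by fun_prop) (EventuallyEq.symm hy)
  let E₁ : 𝕜 → 𝕜 := fun x => k * E x + (x - x₀) * deriv E x
  have hE₁ : AnalyticAt 𝕜 E₁ x₀ := by have := hE.deriv; fun_prop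
  let E₂ : 𝕜 → 𝕜 := fun x => k * E₁ x + (x - x₀) * deriv E₁ x
  have hE₂ : AnalyticAt 𝕜 E₂ x₀ := by have := hE₁.deriv; fun_prop
  have hy₁ : ∀ᶠ x in 𝓝 x₀, (x - x₀) * deriv y x = (x - x₀) ^ k * E₁ x :=
    eventually_sub_mul_deriv_eq (hE.eventually_analyticAt.mono fun _ h => h.differentiableAt) hy
  have hy₂ : ∀ᶠ x in 𝓝 x₀,
      (x - x₀) * deriv (fun t => (t - x₀) * deriv y t) x = (x - x₀) ^ k * E₂ x :=
    eventually_sub_mul_deriv_eq (hE₁.eventually_analyticAt.mono fun _ h => h.differentiableAt) hy₁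
  let B : 𝕜 → 𝕜 := fun x => p x * (E₂ x - E₁ x) + q x * E₁ x + r x * E x
  have hBcont : ContinuousAt B x₀ :=
    ((hp.mul (hE₂.continuousAt.sub hE₁.continuousAt)).add (hq.mul hE₁.continuousAt)).add
      (hr.mul hE.continuousAt)
  have hB : ∀ᶠ x in 𝓝[≠] x₀, B x = 0 := by
    filter_upwards [hode, eventually_nhdsWithin_of_eventually_nhds
      (hy.and (hy₁.and (hy₂.and hyan.eventually_analyticAt))), self_mem_nhdsWithin]
      with x hx ⟨hyx, hyx₁, hyx₂, hyanx⟩ hne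
    refine (mul_eq_zero.mp ?_).resolve_left (pow_ne_zero k (sub_ne_zero.mpr hne))
    have hsecond := sub_sq_mul_iteratedDeriv_two (x₀ := x₀) hyanx.deriv.differentiableAt
    rw [hyx₁, hyx₂] at hsecond
    linear_combination hx - p x * hsecond - q x * hyx₁ - r x * hyx
  have hBx₀ : B x₀ = 0 :=
    (hBcont.eventuallyEq_nhds_iff_eventuallyEq_nhdsNE continuousAt_const).mp hB |>.self_of_nhds
  refine (mul_eq_zero.mp ?_).resolve_right hE₀
  simp only [B, E₂, E₁, sub_self, zero_mul, add_zero] at hBx₀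
  linear_combination hBx₀

theorem eventually_eq_zero_of_indicial_ne_zero (hy : AnalyticAt 𝕜 y x₀) (hy₀ : y x₀ = 0)
    (hp : ContinuousAt p x₀) (hq : ContinuousAt q x₀) (hr : ContinuousAt r x₀)
    (hindicial : ∀ k : ℕ, k ≠ 0 → k * (k - 1) * p x₀ + k * q x₀ + r x₀ ≠ 0)
    (hode : ∀ᶠ x in 𝓝[≠] x₀, (x - x₀) ^ 2 * p x * iteratedDeriv 2 y x +
      (x - x₀) * q x * deriv y x + r x * y x = 0) :
    ∀ᶠ x in 𝓝 x₀, y x = 0 := by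
  by_contra hne
  obtain ⟨k, E, hE, hE₀, hyE⟩ := hy.exists_eventuallyEq_pow_smul_nonzero_iff.mpr hne
  have hk : k ≠ 0 := by
    rintro rfl
    exact hE₀ (by simpa [hy₀] using hyE.self_of_nhds.symm)
  exact hindicial k hk (indicial_eq_zero_of_eventually_eq_sub_pow_mul hE hE₀ hyE hp hq hr hode)

end Frobenius

section Gauss

/-- Gauss' hypergeometric differential operator with parameters `a`, `b`, `c`, which annihilates
`₂F₁ a b c`. -/
noncomputable def gaussOperator {𝕜 : Type*} [NontriviallyNormedField 𝕜] (a b c : 𝕜)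
    (y : 𝕜 → 𝕜) (z : 𝕜) : 𝕜 :=
  z * (1 - z) * iteratedDeriv 2 y z + (c - (a + b + 1) * z) * deriv y z - a * b * y z

theorem ordinaryHypergeometricCoefficient_succ {𝕜 : Type*} [Field 𝕜] [CharZero 𝕜] {a b c : 𝕜}
    {n : ℕ} (hc : c ≠ -n) :
    (n + 1) * (n + c) * ordinaryHypergeometricCoefficient a b c (n + 1) =
      (n + a) * (n + b) * ordinaryHypergeometricCoefficient a b c n := by
  have hcn : c + n ≠ 0 := by rwa [Ne, add_eq_zero_iff_eq_neg]
  have hn : (n : 𝕜) + 1 ≠ 0 := Nat.cast_add_one_ne_zero n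
  simp only [ordinaryHypergeometricCoefficient, ascPochhammer_succ_eval, Nat.factorial_succ,
    Nat.cast_mul, Nat.cast_succ, mul_inv]
  field_simp
  ring

variable {𝕜 : Type*} [RCLike 𝕜] {a b c z : 𝕜}

theorem one_le_radius_ordinaryHypergeometricSeries (a b c : 𝕜) :
    1 ≤ (ordinaryHypergeometricSeries 𝕜 a b c).radius := by
  by_cases habc : ∀ n : ℕ, (n : 𝕜) ≠ -a ∧ (n : 𝕜) ≠ -b ∧ (n : 𝕜) ≠ -c
  · exact (ordinaryHypergeometricSeries_radius_eq_one 𝕜 a b c habc).ge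
  · simp only [not_forall, not_and_or, not_not] at habc
    obtain ⟨n, hn⟩ := habc
    rw [radius_eq_top_of_forall_image_add_eq_zero _ (n + 1) fun k =>
      ordinaryHypergeometricSeries_eq_zero_of_neg_nat a b c hn (by lia)]
    exact le_top

theorem hasFPowerSeriesOnBall_ordinaryHypergeometric (a b c : 𝕜) :
    HasFPowerSeriesOnBall (₂F₁ a b c) (ordinaryHypergeometricSeries 𝕜 a b c) 0 1 :=
  have hradius := one_le_radius_ordinaryHypergeometricSeries a b c
  (FormalMultilinearSeries.hasFPowerSeriesOnBall _ (one_pos.trans_le hradius)).mono one_pos hradius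

theorem analyticAt_ordinaryHypergeometric (hz : ‖z‖ < 1) : AnalyticAt 𝕜 (₂F₁ a b c) z :=
  (hasFPowerSeriesOnBall_ordinaryHypergeometric a b c).analyticAt_of_mem
    (by simpa [enorm_eq_nnnorm] using! hz)

theorem gaussOperator_ordinaryHypergeometric (hc : ∀ n : ℕ, c ≠ -n) (hz : ‖z‖ < 1) :
    gaussOperator a b c (₂F₁ a b c) z = 0 := by
  have hmem : z ∈ Metric.eball 0 1 := by simpa [enorm_eq_nnnorm] using! hz
  set u := ordinaryHypergeometricCoefficient a b c
  have hF : HasFPowerSeriesOnBall (₂F₁ a b c) (ofScalars 𝕜 u) 0 1 :=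
    hasFPowerSeriesOnBall_ordinaryHypergeometric a b c
  have hF' := hasFPowerSeriesOnBall_deriv_ofScalars hF
  have hF'' := hasFPowerSeriesOnBall_deriv_ofScalars hF'
  have hsum := hasSum_mul_pow_of_hasFPowerSeriesOnBall_ofScalars hF hmem
  have hsum' := hasSum_mul_pow_of_hasFPowerSeriesOnBall_ofScalars hF' hmem
  have hzsum' := hasSum_natCast_mul_pow_of_succ hsum'
  have hzsum'' := hasSum_natCast_mul_pow_of_succ (u := fun n => (n + 1) * u (n + 1))
    (hasSum_mul_pow_of_hasFPowerSeriesOnBall_ofScalars hF'' hmem)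
  have hzzsum'' := hasSum_natCast_mul_pow_of_succ (u := fun n => (n - 1) * u n)
    (by convert! hzsum'' using 3; push_cast; ring)
  have hgauss := (((hzsum''.sub hzzsum'').add (hsum'.mul_left c)).sub
    (hzsum'.mul_left (a + b + 1))).sub (hsum.mul_left (a * b))
  have hzero : HasSum (fun _ : ℕ => (0 : 𝕜)) _ := hgauss.congr_fun fun n => by
    linear_combination -z ^ n * ordinaryHypergeometricCoefficient_succ (a := a) (b := b) (hc n)
  rw [gaussOperator, iteratedDeriv_succ, iteratedDeriv_one]
  linear_combination hzero.unique hasSum_zero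

end Gauss

section Calculus

variable {𝕜 : Type*} [NontriviallyNormedField 𝕜] {x : 𝕜}

theorem iteratedDeriv_two_mul {f g : 𝕜 → 𝕜} (hf : ContDiffAt 𝕜 2 f x) (hg : ContDiffAt 𝕜 2 g x) :
    iteratedDeriv 2 (f * g) x =
      iteratedDeriv 2 f x * g x + 2 * deriv f x * deriv g x + f x * iteratedDeriv 2 g x := by
  rw [iteratedDeriv_mul hf hg]
  simp only [Finset.sum_range_succ, Finset.range_one, Finset.sum_singleton, Nat.reduceAdd,
    Nat.choose_zero_right, Nat.choose_succ_self_right, Nat.choose_self, Nat.cast_one,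
    Nat.cast_ofNat, iteratedDeriv_zero, iteratedDeriv_one, one_mul, tsub_zero,
    Nat.add_one_sub_one, tsub_self]
  ring

theorem hasDerivAt_four_mul_div_one_add_sq (hx : 1 + x ≠ 0) :
    HasDerivAt (fun t : 𝕜 => 4 * t / (1 + t) ^ 2) (4 * (1 - x) / (1 + x) ^ 3) x := by
  convert! ((hasDerivAt_id' x).const_mul 4).fun_div (((hasDerivAt_id' x).const_add 1).fun_pow 2)
    (pow_ne_zero 2 hx) using 1
  field_simp
  ring

theorem iteratedDeriv_two_four_mul_div_one_add_sq (hx : 1 + x ≠ 0) :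
    iteratedDeriv 2 (fun t : 𝕜 => 4 * t / (1 + t) ^ 2) x = 8 * (x - 2) / (1 + x) ^ 4 := by
  have hderiv : deriv (fun t : 𝕜 => 4 * t / (1 + t) ^ 2) =ᶠ[𝓝 x]
      fun t => 4 * (1 - t) / (1 + t) ^ 3 := by
    have : ContinuousAt (fun t => 1 + t) x := by fun_prop
    filter_upwards [this.eventually_ne hx] with t ht
      using (hasDerivAt_four_mul_div_one_add_sq ht).deriv
  rw [iteratedDeriv_succ, iteratedDeriv_one, hderiv.deriv_eq]
  refine HasDerivAt.deriv ?_
  convert! (((hasDerivAt_id' x).const_sub 1).const_mul 4).fun_div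
    (((hasDerivAt_id' x).const_add 1).fun_pow 3) (pow_ne_zero 3 hx) using 1
  field_simp
  ring

theorem contDiffAt_four_mul_div_one_add_sq {n : WithTop ℕ∞} (hx : 1 + x ≠ 0) :
    ContDiffAt 𝕜 n (fun t : 𝕜 => 4 * t / (1 + t) ^ 2) x :=
  ContDiffAt.div (by fun_prop) (by fun_prop) (pow_ne_zero 2 hx)

theorem hasDerivAt_one_add_rpow (s : ℝ) {x : ℝ} (hx : 1 + x ≠ 0) :
    HasDerivAt (fun t : ℝ => (1 + t) ^ s) (s * (1 + x) ^ (s - 1)) x := by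
  simpa using ((hasDerivAt_id' x).const_add 1).rpow_const (p := s) (Or.inl hx)

theorem iteratedDeriv_two_one_add_rpow (s x : ℝ) :
    iteratedDeriv 2 (fun t : ℝ => (1 + t) ^ s) x = s * (s - 1) * (1 + x) ^ (s - 2) := by
  simp only [iteratedDeriv_comp_const_add 2 (fun t : ℝ => t ^ s), iteratedDeriv_eq_iterate,
    Real.iter_deriv_rpow_const]
  simp [descPochhammer_succ_eval]

theorem contDiffAt_one_add_rpow {n : WithTop ℕ∞} (s : ℝ) {x : ℝ} (hx : 1 + x ≠ 0) :
    ContDiffAt ℝ n (fun t : ℝ => (1 + t) ^ s) x :=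
  ContDiffAt.rpow_const_of_ne (by fun_prop) hx

end Calculus

section Kummer

/-- The image of Gauss' operators under the two substitutions of Kummer's first quadratic
transformation, `z = x ^ 2` and `z = 4 * x / (1 + x) ^ 2`. -/
noncomputable def kummerOperator {𝕜 : Type*} [NontriviallyNormedField 𝕜] (a b : 𝕜) (y : 𝕜 → 𝕜)
    (x : 𝕜) : 𝕜 :=
  x * (1 - x ^ 2) * iteratedDeriv 2 y x + (2 * b - (4 * a - 2 * b + 2) * x ^ 2) * deriv y x -
    2 * a * (2 * a - 2 * b + 1) * x * y x

section Field

variable {𝕜 : Type*} [NontriviallyNormedField 𝕜] {a b x : 𝕜}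

theorem kummerOperator_sub {f g : 𝕜 → 𝕜} (hf : ContDiffAt 𝕜 2 f x) (hg : ContDiffAt 𝕜 2 g x) :
    kummerOperator a b (f - g) x = kummerOperator a b f x - kummerOperator a b g x := by
  rw [kummerOperator, iteratedDeriv_sub hf hg, deriv_sub (hf.differentiableAt two_ne_zero)
    (hg.differentiableAt two_ne_zero), Pi.sub_apply, kummerOperator, kummerOperator]
  ring

theorem kummerOperator_comp_sq [NeZero (2 : 𝕜)] {f : 𝕜 → 𝕜} (hf : ContDiffAt 𝕜 2 f (x ^ 2)) :
    kummerOperator a b (f ∘ (· ^ 2)) x =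
      4 * x * gaussOperator a (a - b + 1 / 2) (b + 1 / 2) f (x ^ 2) := by
  have hderiv : deriv (f ∘ (· ^ 2)) x = 2 * x * deriv f (x ^ 2) := by
    rw [deriv_comp (h := fun t => t ^ 2) x (hf.differentiableAt two_ne_zero) (by fun_prop)]
    simp [mul_comm]
  have hsecond : iteratedDeriv 2 (f ∘ (· ^ 2)) x =
      4 * x ^ 2 * iteratedDeriv 2 f (x ^ 2) + 2 * deriv f (x ^ 2) := by
    rw [iteratedDeriv_scomp_two (f := fun t => t ^ 2) hf (by fun_prop)]
    have hsq : iteratedDeriv 2 (fun t : 𝕜 => t ^ 2) x = 2 := by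
      simp [iteratedDeriv_pow, Nat.descFactorial]
    rw [hsq, deriv_pow_field, smul_eq_mul, smul_eq_mul]
    push_cast
    ring
  rw [kummerOperator, gaussOperator, hderiv, hsecond, Function.comp_apply]
  field_simp
  ring

theorem eventually_eq_zero_of_kummerOperator_eq_zero [CompleteSpace 𝕜] [CharZero 𝕜] {y : 𝕜 → 𝕜}
    (hb : ∀ n : ℕ, 2 * b ≠ -n) (hy : AnalyticAt 𝕜 y 0) (hy₀ : y 0 = 0)
    (hode : ∀ᶠ x in 𝓝 0, kummerOperator a b y x = 0) : ∀ᶠ x in 𝓝 0, y x = 0 := by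
  refine eventually_eq_zero_of_indicial_ne_zero (p := fun x => 1 - x ^ 2)
    (q := fun x => 2 * b - (4 * a - 2 * b + 2) * x ^ 2)
    (r := fun x => -(2 * a * (2 * a - 2 * b + 1) * x ^ 2)) hy hy₀ (by fun_prop) (by fun_prop)
    (by fun_prop) (fun k hk => ?_) (eventually_nhdsWithin_of_eventually_nhds ?_)
  · obtain ⟨n, rfl⟩ := Nat.exists_eq_succ_of_ne_zero hk
    have hfactor : (n : 𝕜) + 2 * b ≠ 0 := fun h => hb n (eq_neg_of_add_eq_zero_right h)
    convert! mul_ne_zero (Nat.cast_add_one_ne_zero (R := 𝕜) n) hfactor using 1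
    push_cast
    ring
  · filter_upwards [hode] with x hx
    rw [kummerOperator] at hx
    linear_combination x * hx

end Field

variable {a b x : ℝ}

theorem kummerOperator_one_add_rpow_mul_comp {g : ℝ → ℝ} (hx : 1 + x ≠ 0)
    (hg : ContDiffAt ℝ 2 g (4 * x / (1 + x) ^ 2)) :
    kummerOperator a b
        ((fun t => (1 + t) ^ (-2 * a)) * (g ∘ fun t => 4 * t / (1 + t) ^ 2)) x =
      4 * (1 - x) / (1 + x) * (1 + x) ^ (-2 * a) *
        gaussOperator a b (2 * b) g (4 * x / (1 + x) ^ 2) := by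
  have hP := contDiffAt_one_add_rpow (n := 2) (-2 * a) hx
  have hw := contDiffAt_four_mul_div_one_add_sq (n := 2) hx
  have hgw := hg.comp x hw
  have hgw' := (hg.differentiableAt two_ne_zero).hasDerivAt.comp x
    (hasDerivAt_four_mul_div_one_add_sq hx)
  have hrpow₁ : (1 + x) ^ (-2 * a - 1) = (1 + x) ^ (-2 * a) / (1 + x) :=
    Real.rpow_sub_one hx _
  have hrpow₂ : (1 + x) ^ (-2 * a - 2) = (1 + x) ^ (-2 * a) / (1 + x) ^ 2 := by
    exact_mod_cast Real.rpow_sub_natCast hx (-2 * a) 2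
  rw [kummerOperator, gaussOperator, iteratedDeriv_two_mul hP hgw,
    ((hasDerivAt_one_add_rpow (-2 * a) hx).mul hgw').deriv, hgw'.deriv,
    (hasDerivAt_one_add_rpow (-2 * a) hx).deriv, iteratedDeriv_two_one_add_rpow,
    iteratedDeriv_scomp_two (f := fun t => 4 * t / (1 + t) ^ 2) hg hw,
    (hasDerivAt_four_mul_div_one_add_sq hx).deriv, iteratedDeriv_two_four_mul_div_one_add_sq hx,
    hrpow₁, hrpow₂]
  simp only [Pi.mul_apply, Function.comp_apply, smul_eq_mul]
  field_simp
  ring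

theorem one_add_pos_of_mem_Ioo (hx : x ∈ Set.Ioo (2 * √2 - 3) 1) : 0 < 1 + x := by
  linarith [hx.1, Real.one_lt_sqrt_two]

-- `2 * √2 - 3` is the larger root of `x ^ 2 + 6 * x + 1`, where `4 * x / (1 + x) ^ 2 = -1`.
theorem norm_four_mul_div_one_add_sq_lt_one (hx : x ∈ Set.Ioo (2 * √2 - 3) 1) :
    ‖4 * x / (1 + x) ^ 2‖ < 1 := by
  have hsqrt : √2 ^ 2 = 2 := Real.sq_sqrt zero_le_two
  have hx' : 2 * √2 < x + 3 := by linarith [hx.1]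
  have hlower : 0 < x ^ 2 + 6 * x + 1 := by
    nlinarith [pow_lt_pow_left₀ hx' (by positivity) two_ne_zero]
  have hupper : 0 < (1 - x) ^ 2 := pow_pos (sub_pos.mpr hx.2) 2
  have hpos : 0 < (1 + x) ^ 2 := pow_pos (one_add_pos_of_mem_Ioo hx) 2
  rw [Real.norm_eq_abs, abs_lt, lt_div_iff₀ hpos, div_lt_one hpos]
  constructor <;> linarith

theorem norm_sq_lt_one_of_mem_Ioo (hx : x ∈ Set.Ioo (2 * √2 - 3) 1) : ‖x ^ 2‖ < 1 := by
  have := Real.one_lt_sqrt_two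
  rw [norm_pow, sq_lt_one_iff₀ (norm_nonneg x), Real.norm_eq_abs, abs_lt]
  exact ⟨by linarith [hx.1], hx.2⟩

theorem analyticOnNhd_ordinaryHypergeometric_comp_sq (a b c : ℝ) :
    AnalyticOnNhd ℝ (₂F₁ a b c ∘ fun t : ℝ => t ^ 2) (Set.Ioo (2 * √2 - 3) 1) := fun _ hx =>
  (analyticAt_ordinaryHypergeometric (norm_sq_lt_one_of_mem_Ioo hx)).comp (f := fun t => t ^ 2)
    (by fun_prop)

theorem analyticOnNhd_one_add_rpow_mul_ordinaryHypergeometric_comp (a b c s : ℝ) :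
    AnalyticOnNhd ℝ ((fun t : ℝ => (1 + t) ^ s) * (₂F₁ a b c ∘ fun t => 4 * t / (1 + t) ^ 2))
      (Set.Ioo (2 * √2 - 3) 1) := fun _ hx =>
  have hx' := (one_add_pos_of_mem_Ioo hx).ne'
  (contDiffAt_one_add_rpow s hx').analyticAt.mul <|
    (analyticAt_ordinaryHypergeometric (norm_four_mul_div_one_add_sq_lt_one hx)).comp
      (f := fun t => 4 * t / (1 + t) ^ 2) (contDiffAt_four_mul_div_one_add_sq hx').analyticAt

theorem kummerOperator_ordinaryHypergeometric_comp_sq (hb : ∀ n : ℕ, 2 * b ≠ -n)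
    (hx : ‖x ^ 2‖ < 1) :
    kummerOperator a b (₂F₁ a (a - b + 1 / 2) (b + 1 / 2) ∘ fun t => t ^ 2) x = 0 := by
  have hb' (n : ℕ) : b + 1 / 2 ≠ -n := fun h =>
    hb (2 * n + 1) (by push_cast; linear_combination 2 * h)
  rw [kummerOperator_comp_sq (analyticAt_ordinaryHypergeometric hx).contDiffAt,
    gaussOperator_ordinaryHypergeometric hb' hx, mul_zero]

theorem kummerOperator_one_add_rpow_mul_ordinaryHypergeometric_comp (hb : ∀ n : ℕ, 2 * b ≠ -n)
    (hx : 1 + x ≠ 0) (hx' : ‖4 * x / (1 + x) ^ 2‖ < 1) :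
    kummerOperator a b ((fun t => (1 + t) ^ (-2 * a)) *
      (₂F₁ a b (2 * b) ∘ fun t => 4 * t / (1 + t) ^ 2)) x = 0 := by
  rw [kummerOperator_one_add_rpow_mul_comp hx (analyticAt_ordinaryHypergeometric hx').contDiffAt,
    gaussOperator_ordinaryHypergeometric hb hx', mul_zero]

theorem ordinaryHypergeometric_sq_eq_one_add_rpow_mul (hb : ∀ n : ℕ, 2 * b ≠ -n)
    (hx : x ∈ Set.Ioo (2 * √2 - 3) 1) :
    ₂F₁ a (a - b + 1 / 2) (b + 1 / 2) (x ^ 2) =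
      (1 + x) ^ (-2 * a) * ₂F₁ a b (2 * b) (4 * x / (1 + x) ^ 2) := by
  let L : ℝ → ℝ := ₂F₁ a (a - b + 1 / 2) (b + 1 / 2) ∘ fun t => t ^ 2
  let R : ℝ → ℝ :=
    (fun t => (1 + t) ^ (-2 * a)) * (₂F₁ a b (2 * b) ∘ fun t => 4 * t / (1 + t) ^ 2)
  have hL : AnalyticOnNhd ℝ L (Set.Ioo (2 * √2 - 3) 1) :=
    analyticOnNhd_ordinaryHypergeometric_comp_sq _ _ _
  have hR : AnalyticOnNhd ℝ R (Set.Ioo (2 * √2 - 3) 1) :=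
    analyticOnNhd_one_add_rpow_mul_ordinaryHypergeometric_comp _ _ _ _
  have hzero : 0 ∈ Set.Ioo (2 * √2 - 3) 1 := ⟨by linarith [Real.sqrt_two_lt_three_halves], one_pos⟩
  have hode : ∀ᶠ t in 𝓝 0, kummerOperator a b (L - R) t = 0 := by
    filter_upwards [isOpen_Ioo.mem_nhds hzero] with t ht
    rw [kummerOperator_sub (hL t ht).contDiffAt (hR t ht).contDiffAt,
      kummerOperator_ordinaryHypergeometric_comp_sq hb (norm_sq_lt_one_of_mem_Ioo ht),
      kummerOperator_one_add_rpow_mul_ordinaryHypergeometric_comp hb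
        (one_add_pos_of_mem_Ioo ht).ne' (norm_four_mul_div_one_add_sq_lt_one ht), sub_zero]
  have hnear : L =ᶠ[𝓝 0] R := by
    have hvalue : (L - R) 0 = 0 := by simp [L, R]
    filter_upwards [eventually_eq_zero_of_kummerOperator_eq_zero hb
      ((hL 0 hzero).sub (hR 0 hzero)) hvalue hode] with t ht using sub_eq_zero.mp ht
  exact hL.eqOn_of_preconnected_of_eventuallyEq hR isPreconnected_Ioo hzero hnear hx

end Kummer

theorem hyp2F1_eq_ordinaryHypergeometric (a b c z : ℝ) : hyp2F1 a b c z = ₂F₁ a b c z := by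
  rw [ordinaryHypergeometric_eq_tsum, hyp2F1]
  refine tsum_congr fun n => ?_
  rw [rpoch, rpoch, rpoch, smul_eq_mul, div_eq_mul_inv, mul_inv]
  ring

theorem statement5_general (β₁ β₂ Λ : ℝ) (hβ₁ : ∀ n : ℕ, 2 * β₁ ≠ -n) (hΛ0 : 0 < Λ)
    (hΛ : Λ < √2) :
    hyp2F1 (β₁ + β₂ - 1 / 2) β₂ (β₁ + 1 / 2) (((1 - Λ) / (1 + Λ)) ^ 2) =
      ((1 + Λ) / 2) ^ (2 * β₁ + 2 * β₂ - 1) *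
      hyp2F1 (β₁ + β₂ - 1 / 2) β₁ (2 * β₁) (1 - Λ ^ 2) := by
  have hsqrt : √2 * √2 = 2 := Real.mul_self_sqrt zero_le_two
  have hmem : (1 - Λ) / (1 + Λ) ∈ Set.Ioo (2 * √2 - 3) 1 := by
    rw [Set.mem_Ioo, lt_div_iff₀ (by positivity), div_lt_one (by positivity)]
    constructor
    · nlinarith [Real.sqrt_two_lt_three_halves]
    · linarith
  have hkummer := ordinaryHypergeometric_sq_eq_one_add_rpow_mul (a := β₁ + β₂ - 1 / 2) hβ₁ hmem
  have hparam : β₁ + β₂ - 1 / 2 - β₁ + 1 / 2 = β₂ := by ring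
  have hbase : 1 + (1 - Λ) / (1 + Λ) = ((1 + Λ) / 2)⁻¹ := by field_simp; ring
  have harg : 4 * ((1 - Λ) / (1 + Λ)) / ((1 + Λ) / 2)⁻¹ ^ 2 = 1 - Λ ^ 2 := by field_simp; ring
  have hexp : -2 * (β₁ + β₂ - 1 / 2) = -(2 * β₁ + 2 * β₂ - 1) := by ring
  rw [hparam, hbase, harg, hexp, Real.inv_rpow (by positivity), Real.rpow_neg (by positivity),
    inv_inv] at hkummer
  rwa [hyp2F1_eq_ordinaryHypergeometric, hyp2F1_eq_ordinaryHypergeometric]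

/-- Kummer's first quadratic identity. -/
theorem statement5 (β₁ β₂ Λ : ℝ) (hβ₁ : 0 < β₁) (hβ₂ : 0 < β₂)
    (hΛ0 : 0 < Λ) (hΛ1 : Λ < 1) :
    hyp2F1 (β₁ + β₂ - 1 / 2) β₂ (β₁ + 1 / 2) (((1 - Λ) / (1 + Λ)) ^ 2) =
      ((1 + Λ) / 2) ^ (2 * β₁ + 2 * β₂ - 1) *
      hyp2F1 (β₁ + β₂ - 1 / 2) β₁ (2 * β₁) (1 - Λ ^ 2) :=
  statement5_general β₁ β₂ Λ (fun n => by have := n.cast_nonneg (α := ℝ); linarith) hΛ0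
    (hΛ1.trans Real.one_lt_sqrt_two)
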